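/- Let n ≥ 2 be an integer, let r_1, …, r_n > 0 and let ε_1, …, ε_n ∈ {−1, 1} be such that both values −1 and +1 occur among the ε_j. For a smooth function u : ℝⁿ → ℝ which is 2πr_j-periodic in the j-th variable for every j, set T(u) = ∫_{[0,2πr_1]×…×[0,2πr_n]} ( ( Σ_{j=1}^n ε_j ∂_j∂_j u )² − Σ_{j=1}^n (∂_j u)²/r_j² + 2 Σ_{1≤j<k≤n} ε_j ε_k (∂_j u)(∂_k u)/(r_j r_k) ). Then T is indefinite: there exist smooth functions u, v, each 2πr_j-periodic in the j-th variable for every j, with T(u) > 0 and T(v) < 0. -/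

import Mathlib

open MeasureTheory Real

/-- The partial derivative `∂_j u` of a function `u : ℝⁿ → ℝ`. -/
noncomputable def pd {n : ℕ} (j : Fin n) (u : (Fin n → ℝ) → ℝ) (x : Fin n → ℝ) : ℝ :=
  fderiv ℝ u x (Pi.single j 1)

/-!
Test `T` on the waves `cos (c ⬝ᵥ x)` with `c j = m j / r j`, `m` integral and nonzero. Along such a
wave the integrand is `A ^ 2 * cos² + B * sin²` with constants `A`, `B` depending on `c`, and `cos²`
and `sin²` both have mean `1 / 2`, so the sign of `T` is that of `A ^ 2 + B`. The quartic term
`A ^ 2` wins for `m = 2 e_p`. If `ε p` and `ε q` have opposite signs, then for `m = e_p + e_q` the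
square `A ^ 2` suffers a cancellation and the quadratic part `B` makes the sum negative.
-/

section FiniteSums

variable {ι : Type*} [Fintype ι]

lemma two_mul_sum_sum_ite_lt_mul {R : Type*} [CommRing R] [LinearOrder ι] (d : ι → R) :
    2 * ∑ j, ∑ k, (if j < k then d j * d k else 0) = (∑ j, d j) ^ 2 - ∑ j, d j ^ 2 := by
  have trichotomy : ∀ j k, d j * d k = (if j < k then d j * d k else 0) +
      (if k < j then d j * d k else 0) + (if j = k then d j * d k else 0) := fun j k => by
    rcases lt_trichotomy j k with h | h | h
    · simp [h, h.ne, h.not_gt]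
    · simp [h]
    · simp [h, h.ne', h.not_gt]
  have swap : ∑ j, ∑ k, (if k < j then d j * d k else 0) =
      ∑ j, ∑ k, (if j < k then d j * d k else 0) := by
    rw [Finset.sum_comm]
    simp only [mul_comm]
  have diag : ∑ j, ∑ k, (if j = k then d j * d k else 0) = ∑ j, d j ^ 2 := by
    simp only [sq, Finset.sum_ite_eq, Finset.mem_univ, if_true]
  have square : (∑ j, d j) ^ 2 = ∑ j, ∑ k, (if j < k then d j * d k else 0) +
      ∑ j, ∑ k, (if j < k then d j * d k else 0) + ∑ j, d j ^ 2 := by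
    rw [sq, Finset.sum_mul_sum]
    nth_rewrite 2 [← swap]
    simp only [← diag, ← Finset.sum_add_distrib, ← trichotomy]
  rw [square]
  ring

lemma sum_comp_single [DecidableEq ι] {M N : Type*} [Zero M] [AddCommMonoid N]
    (p : ι) (s : M) (f : ι → M → N) (hf : ∀ j, f j 0 = 0) :
    ∑ j, f j ((Pi.single p s : ι → M) j) = f p s := by
  rw [Fintype.sum_eq_single p fun j hj => by simp [hj, hf], Pi.single_eq_same]

lemma sum_comp_single_add_single [DecidableEq ι] {M N : Type*} [AddZeroClass M] [AddCommMonoid N]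
    {p q : ι} (hpq : p ≠ q) (s t : M) (f : ι → M → N) (hf : ∀ j, f j 0 = 0) :
    ∑ j, f j ((Pi.single p s + Pi.single q t : ι → M) j) = f p s + f q t := by
  rw [Fintype.sum_eq_add p q hpq fun j hj => by simp [hj.1, hj.2, hf]]
  simp [hpq, hpq.symm]

end FiniteSums

/-- The wave `x ↦ cos (c ⬝ᵥ x)` with frequency vector `c`, used as a test potential. -/
noncomputable def cosWave {ι : Type*} [Fintype ι] (c : ι → ℝ) (x : ι → ℝ) : ℝ :=
  cos (c ⬝ᵥ x)

/-- The point of the lattice dual to `∏ⱼ 2πrⱼℤ` with integer coordinates `m`, scaled by `2π`. -/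
noncomputable def dualFrequency {ι : Type*} (r : ι → ℝ) (m : ι → ℤ) (j : ι) : ℝ :=
  m j / r j

lemma dualFrequency_single {ι : Type*} [DecidableEq ι] (r : ι → ℝ) (p : ι) (a : ℤ) :
    dualFrequency r (Pi.single p a) = Pi.single p (a / r p) := by
  ext j
  rcases eq_or_ne j p with rfl | h <;> simp [dualFrequency, *]

lemma dualFrequency_add {ι : Type*} (r : ι → ℝ) (m m' : ι → ℤ) :
    dualFrequency r (m + m') = dualFrequency r m + dualFrequency r m' := by
  ext j
  simp [dualFrequency, add_div]

/-- A fundamental domain of the torus `S¹(r₁) × … × S¹(rₙ)` in arc length coordinates. -/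
def torusBox {ι : Type*} (r : ι → ℝ) : Set (ι → ℝ) :=
  Set.univ.pi fun j => Set.Icc 0 (2 * π * r j)

lemma isCompact_torusBox {ι : Type*} (r : ι → ℝ) : IsCompact (torusBox r) :=
  isCompact_univ_pi fun _ => isCompact_Icc

section Waves

variable {ι : Type*} [Fintype ι]

lemma contDiff_cosWave {k : WithTop ℕ∞} (c : ι → ℝ) : ContDiff ℝ k (cosWave c) := by
  unfold cosWave dotProduct
  fun_prop

lemma cosWave_add_period [DecidableEq ι] {r : ι → ℝ} {j : ι} (hr : r j ≠ 0) (m : ι → ℤ)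
    (x : ι → ℝ) :
    cosWave (dualFrequency r m) (x + Pi.single j (2 * π * r j)) =
      cosWave (dualFrequency r m) x := by
  have shift : dualFrequency r m j * (2 * π * r j) = m j * (2 * π) := by
    rw [dualFrequency]
    field_simp
  rw [cosWave, dotProduct_add, dotProduct_single, shift, cos_add_int_mul_two_pi, cosWave]

lemma pd_comp_dotProduct {n : ℕ} {f : ℝ → ℝ} {f' : ℝ} (c : Fin n → ℝ) (j : Fin n) (x : Fin n → ℝ)
    (hf : HasDerivAt f f' (c ⬝ᵥ x)) : pd j (fun y => f (c ⬝ᵥ y)) x = c j * f' := by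
  have hphase : HasFDerivAt (fun y : Fin n → ℝ => c ⬝ᵥ y)
      (∑ i, c i • ContinuousLinearMap.proj (R := ℝ) (φ := fun _ => ℝ) i) x :=
    HasFDerivAt.fun_sum fun i _ => (hasFDerivAt_apply i x).const_mul (c i)
  have hcomp := (hf.comp_hasFDerivAt x hphase).fderiv
  simp only [Function.comp_def] at hcomp
  rw [pd, hcomp]
  simp [Pi.single_apply, mul_comm]

lemma pd_cosWave {n : ℕ} (c : Fin n → ℝ) (j : Fin n) :
    pd j (cosWave c) = fun x => c j * -sin (c ⬝ᵥ x) :=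
  funext fun x => pd_comp_dotProduct c j x (hasDerivAt_cos _)

lemma pd_pd_cosWave {n : ℕ} (c : Fin n → ℝ) (j : Fin n) :
    pd j (pd j (cosWave c)) = fun x => c j * (c j * -cos (c ⬝ᵥ x)) := by
  rw [pd_cosWave]
  exact funext fun x => pd_comp_dotProduct (f := fun t => c j * -sin t) c j x
    ((hasDerivAt_sin _).neg.const_mul (c j))

end Waves

section Averages

variable {ι : Type*} [Fintype ι]

lemma volume_real_torusBox_pos {r : ι → ℝ} (hr : ∀ j, 0 < r j) :
    0 < volume.real (torusBox r) := by
  have hside : ∀ j, 0 < 2 * π * r j := fun j => mul_pos two_pi_pos (hr j)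
  rw [measureReal_def, torusBox, Set.pi_univ_Icc,
    Real.volume_Icc_pi_toReal fun j => (hside j).le]
  exact Finset.prod_pos fun j _ => by simpa only [sub_zero] using hside j

lemma setIntegral_pi_cexp_dotProduct (s : ι → Set ℝ) (c : ι → ℝ) :
    ∫ x in Set.univ.pi s, Complex.exp ((c ⬝ᵥ x : ℝ) * Complex.I) =
      ∏ j, ∫ t in s j, Complex.exp (c j * Complex.I * t) := by
  have factor : ∀ x : ι → ℝ, Complex.exp ((c ⬝ᵥ x : ℝ) * Complex.I) =
      ∏ j, Complex.exp (c j * Complex.I * x j) := fun x => by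
    rw [← Complex.exp_sum, dotProduct, Complex.ofReal_sum, Finset.sum_mul]
    simp only [Complex.ofReal_mul, mul_right_comm]
  simp_rw [factor]
  rw [volume_pi, Measure.restrict_pi_pi,
    integral_fintype_prod_eq_prod fun j (t : ℝ) => Complex.exp (c j * Complex.I * t)]

lemma setIntegral_Icc_cexp_eq_zero {ρ : ℝ} (hρ : 0 < ρ) {k : ℤ} (hk : k ≠ 0) :
    ∫ t in Set.Icc 0 (2 * π * ρ), Complex.exp ((k / ρ : ℝ) * Complex.I * t) = 0 := by
  have hfreq : ((k / ρ : ℝ) : ℂ) * Complex.I ≠ 0 :=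
    mul_ne_zero (Complex.ofReal_ne_zero.mpr (div_ne_zero (Int.cast_ne_zero.mpr hk) hρ.ne'))
      Complex.I_ne_zero
  have hperiod : ((k / ρ : ℝ) : ℂ) * Complex.I * (2 * π * ρ : ℝ) =
      k * (2 * π * Complex.I) := by
    have := Complex.ofReal_ne_zero.mpr hρ.ne'
    push_cast
    field_simp
  rw [integral_Icc_eq_integral_Ioc,
    ← intervalIntegral.integral_of_le (mul_pos two_pi_pos hρ).le,
    integral_exp_mul_complex hfreq, hperiod, Complex.exp_int_mul_two_pi_mul_I]
  simp

lemma setIntegral_cosWave_eq_zero {r : ι → ℝ} {m : ι → ℤ} {p : ι} (hr : 0 < r p) (hm : m p ≠ 0) :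
    ∫ x in torusBox r, cosWave (dualFrequency r m) x = 0 := by
  have hexp : ∫ x in torusBox r,
      Complex.exp ((dualFrequency r m ⬝ᵥ x : ℝ) * Complex.I) = 0 := by
    rw [torusBox, setIntegral_pi_cexp_dotProduct]
    exact Finset.prod_eq_zero (Finset.mem_univ p) (setIntegral_Icc_cexp_eq_zero hr hm)
  have hint : IntegrableOn
      (fun x => Complex.exp ((dualFrequency r m ⬝ᵥ x : ℝ) * Complex.I)) (torusBox r) := by
    refine ContinuousOn.integrableOn_compact (isCompact_torusBox r) ?_
    unfold dotProduct
    fun_prop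
  calc ∫ x in torusBox r, cosWave (dualFrequency r m) x
      = ∫ x in torusBox r,
          RCLike.re (Complex.exp ((dualFrequency r m ⬝ᵥ x : ℝ) * Complex.I)) := by
        simp only [cosWave, RCLike.re_to_complex, Complex.exp_ofReal_mul_I_re]
    _ = 0 := by rw [integral_re hint, hexp, map_zero]

lemma setIntegral_cos_sq_add_sin_sq {r : ι → ℝ} {m : ι → ℤ} {p : ι} (hr : 0 < r p)
    (hm : m p ≠ 0) (a b : ℝ) :
    ∫ x in torusBox r,
        (a * cos (dualFrequency r m ⬝ᵥ x) ^ 2 + b * sin (dualFrequency r m ⬝ᵥ x) ^ 2) =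
      volume.real (torusBox r) / 2 * (a + b) := by
  have double : ∀ x, cosWave (dualFrequency r (2 • m)) x =
      2 * cos (dualFrequency r m ⬝ᵥ x) ^ 2 - 1 := fun x => by
    have : dualFrequency r (2 • m) = 2 • dualFrequency r m := by
      ext j
      simp [dualFrequency, mul_div_assoc]
    rw [cosWave, this, smul_dotProduct, nsmul_eq_mul, Nat.cast_ofNat, cos_two_mul]
  have hzero : ∫ x in torusBox r, cosWave (dualFrequency r (2 • m)) x = 0 :=
    setIntegral_cosWave_eq_zero hr (by simpa using hm)
  have hint : IntegrableOn (cosWave (dualFrequency r (2 • m))) (torusBox r) :=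
    (contDiff_cosWave (k := 0) _).continuous.continuousOn.integrableOn_compact
      (isCompact_torusBox r)
  have hconst : IntegrableOn (fun _ : ι → ℝ => (a + b) / 2) (torusBox r) :=
    continuousOn_const.integrableOn_compact (isCompact_torusBox r)
  calc ∫ x in torusBox r,
        (a * cos (dualFrequency r m ⬝ᵥ x) ^ 2 + b * sin (dualFrequency r m ⬝ᵥ x) ^ 2)
      = ∫ x in torusBox r,
          ((a + b) / 2 + (a - b) / 2 * cosWave (dualFrequency r (2 • m)) x) := by
        refine integral_congr_ae (.of_forall fun x => ?_)
        simp only [double, sin_sq]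
        ring
    _ = volume.real (torusBox r) / 2 * (a + b) := by
        rw [integral_add hconst (hint.const_mul _), integral_const_mul, hzero, setIntegral_const,
          smul_eq_mul]
        ring

end Averages

section SecondVariation

variable {n : ℕ}

/-- The integrand of the second variation of volume under the Hamiltonian variation with
potential `u`. -/
noncomputable def secondVariationDensity (r ε : Fin n → ℝ) (u : (Fin n → ℝ) → ℝ)
    (x : Fin n → ℝ) : ℝ :=
  (∑ j, ε j * pd j (pd j u) x) ^ 2 - ∑ j, (pd j u x) ^ 2 / (r j) ^ 2
    + 2 * ∑ j, ∑ k, (if j < k then ε j * ε k * pd j u x * pd k u x / (r j * r k) else 0)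

/-- The functional `T` of the product of circles of radii `r j`. The coefficients `ε j` may be
arbitrary reals; `T` is the second variation of volume for the flat form when they are `±1`. -/
noncomputable def secondVariation (r ε : Fin n → ℝ) (u : (Fin n → ℝ) → ℝ) : ℝ :=
  ∫ x in torusBox r, secondVariationDensity r ε u x

/-- The coefficient of `sin²` in the second variation density of a wave of frequency `c`. -/
noncomputable def gradientSymbol (r ε c : Fin n → ℝ) : ℝ :=
  (∑ j, ε j * (c j / r j)) ^ 2 - ∑ j, (1 + ε j ^ 2) * (c j / r j) ^ 2

/-- Twice the mean over the torus of the second variation density of a wave whose frequency `c`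
is a nonzero dual lattice vector; its sign is the sign of `T` there. -/
noncomputable def secondVariationSymbol (r ε c : Fin n → ℝ) : ℝ :=
  (∑ j, ε j * c j ^ 2) ^ 2 + gradientSymbol r ε c

lemma secondVariationDensity_cosWave (r ε c x : Fin n → ℝ) :
    secondVariationDensity r ε (cosWave c) x =
      (∑ j, ε j * c j ^ 2) ^ 2 * cos (c ⬝ᵥ x) ^ 2 +
        gradientSymbol r ε c * sin (c ⬝ᵥ x) ^ 2 := by
  simp only [secondVariationDensity, pd_pd_cosWave]
  simp only [pd_cosWave]
  set θ := c ⬝ᵥ x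
  have laplacian : ∑ j, ε j * (c j * (c j * -cos θ)) = (∑ j, ε j * c j ^ 2) * -cos θ := by
    rw [Finset.sum_mul]
    exact Finset.sum_congr rfl fun j _ => by ring
  have gradient : ∑ j, (c j * -sin θ) ^ 2 / r j ^ 2 = (∑ j, (c j / r j) ^ 2) * sin θ ^ 2 := by
    rw [Finset.sum_mul]
    exact Finset.sum_congr rfl fun j _ => by ring
  have cross : ∑ j, ∑ k, (if j < k then
        ε j * ε k * (c j * -sin θ) * (c k * -sin θ) / (r j * r k) else 0) =
      (∑ j, ∑ k, if j < k then (ε j * (c j / r j)) * (ε k * (c k / r k)) else 0) *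
        sin θ ^ 2 := by
    simp only [Finset.sum_mul, ite_mul, zero_mul]
    exact Finset.sum_congr rfl fun j _ => Finset.sum_congr rfl fun k _ =>
      if_congr Iff.rfl (by ring) rfl
  rw [laplacian, gradient, cross, ← mul_assoc,
    two_mul_sum_sum_ite_lt_mul fun j => ε j * (c j / r j)]
  simp only [gradientSymbol, one_add_mul, mul_pow, Finset.sum_add_distrib]
  ring

lemma secondVariation_cosWave {r : Fin n → ℝ} {m : Fin n → ℤ} {p : Fin n} (hr : 0 < r p)
    (hm : m p ≠ 0) (ε : Fin n → ℝ) :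
    secondVariation r ε (cosWave (dualFrequency r m)) =
      volume.real (torusBox r) / 2 * secondVariationSymbol r ε (dualFrequency r m) := by
  simp only [secondVariation, secondVariationDensity_cosWave]
  exact setIntegral_cos_sq_add_sin_sq hr hm _ _

lemma secondVariationSymbol_single (r ε : Fin n → ℝ) (p : Fin n) (s : ℝ) :
    secondVariationSymbol r ε (Pi.single p s) = ε p ^ 2 * s ^ 4 - (s / r p) ^ 2 := by
  rw [secondVariationSymbol, gradientSymbol,
    sum_comp_single p s (fun j y => ε j * y ^ 2) (by simp),
    sum_comp_single p s (fun j y => ε j * (y / r j)) (by simp),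
    sum_comp_single p s (fun j y => (1 + ε j ^ 2) * (y / r j) ^ 2) (by simp)]
  ring

lemma secondVariationSymbol_single_add_single (r ε : Fin n → ℝ) {p q : Fin n} (hpq : p ≠ q)
    (s t : ℝ) :
    secondVariationSymbol r ε (Pi.single p s + Pi.single q t) =
      (ε p * s ^ 2 + ε q * t ^ 2) ^ 2 + 2 * (ε p * ε q) * (s / r p) * (t / r q)
        - (s / r p) ^ 2 - (t / r q) ^ 2 := by
  rw [secondVariationSymbol, gradientSymbol,
    sum_comp_single_add_single hpq s t (fun j y => ε j * y ^ 2) (by simp),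
    sum_comp_single_add_single hpq s t (fun j y => ε j * (y / r j)) (by simp),
    sum_comp_single_add_single hpq s t (fun j y => (1 + ε j ^ 2) * (y / r j) ^ 2) (by simp)]
  ring

lemma secondVariation_cosWave_pos {r ε : Fin n → ℝ} (hr : ∀ j, 0 < r j) {p : Fin n}
    (hp : 1 < 4 * ε p ^ 2) :
    0 < secondVariation r ε (cosWave (dualFrequency r (Pi.single p 2))) := by
  have hrp := hr p
  rw [secondVariation_cosWave hrp (by simp), dualFrequency_single, secondVariationSymbol_single,
    Int.cast_ofNat]
  refine mul_pos (half_pos (volume_real_torusBox_pos hr)) ?_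
  calc (0 : ℝ) < 4 * (4 * ε p ^ 2 - 1) / r p ^ 4 := by
        have := sub_pos.mpr hp
        positivity
    _ = ε p ^ 2 * (2 / r p) ^ 4 - (2 / r p / r p) ^ 2 := by
        field_simp
        ring

lemma secondVariation_cosWave_neg {r ε : Fin n → ℝ} (hr : ∀ j, 0 < r j) {p q : Fin n}
    (hp : ε p = 1) (hq : ε q = -1) :
    secondVariation r ε (cosWave (dualFrequency r (Pi.single p 1 + Pi.single q 1))) < 0 := by
  have hpq : p ≠ q := by
    rintro rfl
    norm_num [hp] at hq
  have hrp := hr p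
  have hrq := hr q
  rw [secondVariation_cosWave hrp (by simp [hpq]), dualFrequency_add, dualFrequency_single,
    dualFrequency_single, secondVariationSymbol_single_add_single r ε hpq, Int.cast_one]
  refine mul_neg_of_pos_of_neg (half_pos (volume_real_torusBox_pos hr)) ?_
  calc (ε p * (1 / r p) ^ 2 + ε q * (1 / r q) ^ 2) ^ 2
        + 2 * (ε p * ε q) * (1 / r p / r p) * (1 / r q / r q)
        - (1 / r p / r p) ^ 2 - (1 / r q / r q) ^ 2
      = -(4 / (r p ^ 2 * r q ^ 2)) := by
        rw [hp, hq]
        field_simp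
        ring
    _ < 0 := neg_lt_zero.mpr (by positivity)

theorem product_of_circles_H_unstable_general (r ε : Fin n → ℝ) (hr : ∀ j, 0 < r j)
    (hneg : ∃ j, ε j = -1) (hpos : ∃ j, ε j = 1) :
    ∃ u v : (Fin n → ℝ) → ℝ, ContDiff ℝ (⊤ : ℕ∞) u ∧ ContDiff ℝ (⊤ : ℕ∞) v ∧
      (∀ j x, u (x + Pi.single j (2 * π * r j)) = u x) ∧
      (∀ j x, v (x + Pi.single j (2 * π * r j)) = v x) ∧
      0 < secondVariation r ε u ∧ secondVariation r ε v < 0 := by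
  obtain ⟨q, hq⟩ := hneg
  obtain ⟨p, hp⟩ := hpos
  exact ⟨cosWave (dualFrequency r (Pi.single p 2)),
    cosWave (dualFrequency r (Pi.single p 1 + Pi.single q 1)),
    contDiff_cosWave _, contDiff_cosWave _,
    fun j => cosWave_add_period (hr j).ne' _, fun j => cosWave_add_period (hr j).ne' _,
    secondVariation_cosWave_pos hr (by norm_num [hp]), secondVariation_cosWave_neg hr hp hq⟩

end SecondVariation

/-- Hamiltonian instability of the torus `S¹(r₁) × … × S¹(rₙ) ⊂ ℂⁿ` with an
indefinite flat Hermitian form (both signs occur among the `ε j`): the second variation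
functional `T` is indefinite on smooth functions that are `2πr_j`-periodic in each variable. -/
theorem product_of_circles_H_unstable
    (n : ℕ) (hn : 2 ≤ n) (r ε : Fin n → ℝ) (hr : ∀ j, 0 < r j)
    (hε : ∀ j, ε j = -1 ∨ ε j = 1) (hneg : ∃ j, ε j = -1) (hpos : ∃ j, ε j = 1)
    (T : ((Fin n → ℝ) → ℝ) → ℝ)
    (hT : ∀ u, T u = ∫ x in Set.univ.pi (fun j => Set.Icc (0 : ℝ) (2 * π * r j)),
        ((∑ j, ε j * pd j (pd j u) x) ^ 2 - ∑ j, (pd j u x) ^ 2 / (r j) ^ 2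
          + 2 * ∑ j, ∑ k, (if j < k then ε j * ε k * pd j u x * pd k u x / (r j * r k) else 0))) :
    ∃ u v : (Fin n → ℝ) → ℝ, ContDiff ℝ (⊤ : ℕ∞) u ∧ ContDiff ℝ (⊤ : ℕ∞) v ∧
      (∀ j x, u (x + Pi.single j (2 * π * r j)) = u x) ∧
      (∀ j x, v (x + Pi.single j (2 * π * r j)) = v x) ∧
      0 < T u ∧ T v < 0 := by
  obtain rfl : T = secondVariation r ε := funext hT
  exact product_of_circles_H_unstable_general r ε hr hneg hpos
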